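/- Under the one-cluster model with finite fourth moments, for all j, k ∈ {1, …, n}: E[(v + ε_j)(v + ε_k)² w] = τ² η^{-1} [ τ² (3 − κ_v) + σ_j² (κ_ε − 3) · 1{j = k} ], where w = (Σ_{h=1}^n λ_h − 1) v + Σ_{h=1}^n λ_h ε_h. -/

import Mathlib

open MeasureTheory ProbabilityTheory

/-- A product of four `L⁴` functions is integrable. -/
lemma integrable_mul_four_of_memLp_four {Ω : Type*} [MeasurableSpace Ω] {μ : Measure Ω}
    {f₁ f₂ f₃ f₄ : Ω → ℝ} (h₁ : MemLp f₁ 4 μ) (h₂ : MemLp f₂ 4 μ) (h₃ : MemLp f₃ 4 μ)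
    (h₄ : MemLp f₄ 4 μ) : Integrable (fun ω => f₁ ω * f₂ ω * f₃ ω * f₄ ω) μ := by
  have : ENNReal.HolderTriple 4 4 2 := ⟨by
    rw [← ENNReal.toReal_eq_toReal_iff' (by simp) (by simp),
      ENNReal.toReal_add (by simp) (by simp)]
    norm_num⟩
  have h₁₂ : MemLp (f₁ * f₂) 2 μ := h₂.mul h₁
  have h₃₄ : MemLp (f₃ * f₄) 2 μ := h₄.mul h₃
  refine (h₁₂.integrable_mul h₃₄).congr (.of_forall fun ω => ?_)
  simp only [Pi.mul_apply]
  ring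

/-- A centered factor whose index differs from the other three makes the mixed moment vanish. -/
lemma integral_mul_three_eq_zero_of_iIndepFun {Ω ι : Type*} [MeasurableSpace Ω] [DecidableEq ι]
    {μ : Measure Ω} {X : ι → Ω → ℝ} (hX : ∀ i, Measurable (X i)) (hind : iIndepFun X μ)
    {a b c d : ι} (h0 : ∫ ω, X a ω ∂μ = 0) (hab : a ≠ b) (hac : a ≠ c) (had : a ≠ d) :
    ∫ ω, X a ω * (X b ω * X c ω * X d ω) ∂μ = 0 := by
  have hdisj : Disjoint ({a} : Finset ι) {b, c, d} := by simp [hab, hac, had]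
  have h : IndepFun (X a) (fun ω => X b ω * X c ω * X d ω) μ :=
    (hind.indepFun_finset {a} {b, c, d} hdisj hX).comp
      (φ := fun x : ({a} : Finset ι) → ℝ => x ⟨a, by simp⟩)
      (ψ := fun x : ({b, c, d} : Finset ι) → ℝ =>
        x ⟨b, by simp⟩ * x ⟨c, by simp⟩ * x ⟨d, by simp⟩)
      (measurable_pi_apply _) (by fun_prop)
  rw [h.integral_fun_mul_eq_mul_integral (hX a).aestronglyMeasurable
    (by fun_prop), h0, zero_mul]

/-- Mixed second moments of squares of two independent variables factor. -/
lemma integral_sq_mul_sq_of_iIndepFun {Ω ι : Type*} [MeasurableSpace Ω]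
    {μ : Measure Ω} {X : ι → Ω → ℝ} (hX : ∀ i, Measurable (X i)) (hind : iIndepFun X μ)
    {a b : ι} (hab : a ≠ b) :
    ∫ ω, X a ω ^ 2 * X b ω ^ 2 ∂μ = (∫ ω, X a ω ^ 2 ∂μ) * ∫ ω, X b ω ^ 2 ∂μ := by
  have h : IndepFun (fun ω => X a ω ^ 2) (fun ω => X b ω ^ 2) μ :=
    (hind.indepFun hab).comp (φ := fun x : ℝ => x ^ 2) (ψ := fun x : ℝ => x ^ 2)
      (by fun_prop) (by fun_prop)
  exact h.integral_fun_mul_eq_mul_integral (by fun_prop) (by fun_prop)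

/-- Fourth mixed moments of an independent centered family: the Wick pairings plus the fourth
cumulant on the diagonal. -/
lemma integral_mul_four_of_iIndepFun {Ω ι : Type*} [MeasurableSpace Ω] [DecidableEq ι]
    {μ : Measure Ω} {X : ι → Ω → ℝ} (hX : ∀ i, Measurable (X i)) (hind : iIndepFun X μ)
    (h0 : ∀ i, ∫ ω, X i ω ∂μ = 0) {m₂ m₄ : ι → ℝ} (h2 : ∀ i, ∫ ω, X i ω ^ 2 ∂μ = m₂ i)
    (h4 : ∀ i, ∫ ω, X i ω ^ 4 ∂μ = m₄ i) (a b c d : ι) :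
    ∫ ω, X a ω * X b ω * X c ω * X d ω ∂μ
      = (if a = b then if c = d then m₂ a * m₂ c else 0 else 0)
        + (if a = c then if b = d then m₂ a * m₂ b else 0 else 0)
        + (if b = c then if a = d then m₂ a * m₂ b else 0 else 0)
        + (if a = b then if b = c then if c = d then m₄ a - 3 * m₂ a ^ 2 else 0 else 0 else 0) := by
  have zero := fun {a b c d : ι} =>
    integral_mul_three_eq_zero_of_iIndepFun (a := a) (b := b) (c := c) (d := d) hX hind (h0 a)
  have pair : ∀ {a b : ι}, a ≠ b → ∫ ω, X a ω ^ 2 * X b ω ^ 2 ∂μ = m₂ a * m₂ b := fun hab => by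
    rw [integral_sq_mul_sq_of_iIndepFun hX hind hab, h2, h2]
  by_cases hab : a = b
  · subst hab
    by_cases hcd : c = d
    · subst hcd
      by_cases hac : a = c
      · subst hac
        have e : ∀ ω, X a ω * X a ω * X a ω * X a ω = X a ω ^ 4 := fun ω => by ring
        simp only [e, h4, if_true]
        ring
      · have e : ∀ ω, X a ω * X a ω * X c ω * X c ω = X a ω ^ 2 * X c ω ^ 2 := fun ω => by ring
        simp [e, pair hac, hac]
    · by_cases hac : a = c
      · subst hac
        have e : ∀ ω, X a ω * X a ω * X a ω * X d ω = X d ω * (X a ω * X a ω * X a ω) :=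
          fun ω => by ring
        simp only [e, zero (Ne.symm hcd) (Ne.symm hcd) (Ne.symm hcd)]
        simp [hcd]
      · have e : ∀ ω, X a ω * X a ω * X c ω * X d ω = X c ω * (X a ω * X a ω * X d ω) :=
          fun ω => by ring
        simp only [e, zero (Ne.symm hac) (Ne.symm hac) hcd]
        simp [hcd, hac]
  · by_cases hac : a = c
    · subst hac
      by_cases hbd : b = d
      · subst hbd
        have e : ∀ ω, X a ω * X b ω * X a ω * X b ω = X a ω ^ 2 * X b ω ^ 2 := fun ω => by ring
        simp [e, pair hab, hab, Ne.symm hab]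
      · have e : ∀ ω, X a ω * X b ω * X a ω * X d ω = X b ω * (X a ω * X a ω * X d ω) :=
          fun ω => by ring
        simp only [e, zero (Ne.symm hab) (Ne.symm hab) hbd]
        simp [hab, hbd, Ne.symm hab]
    · by_cases had : a = d
      · subst had
        by_cases hbc : b = c
        · subst hbc
          have e : ∀ ω, X a ω * X b ω * X b ω * X a ω = X a ω ^ 2 * X b ω ^ 2 := fun ω => by ring
          simp [e, pair hab, hab]
        · have e : ∀ ω, X a ω * X b ω * X c ω * X a ω = X b ω * (X a ω * X c ω * X a ω) :=
            fun ω => by ring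
          simp only [e, zero (Ne.symm hab) hbc (Ne.symm hab)]
          simp [hab, hac, hbc]
      · have e : ∀ ω, X a ω * X b ω * X c ω * X d ω = X a ω * (X b ω * X c ω * X d ω) :=
          fun ω => by ring
        simp only [e, zero hab hac had]
        simp [hab, hac, had]

/-- Mixed moments of three members of an independent centered family against a linear
combination of the family. -/
lemma integral_mul_three_mul_sum_of_iIndepFun {Ω ι : Type*} [MeasurableSpace Ω] [Fintype ι]
    [DecidableEq ι] {μ : Measure Ω} {X : ι → Ω → ℝ} (hX : ∀ i, Measurable (X i))
    (hind : iIndepFun X μ) (hL : ∀ i, MemLp (X i) 4 μ)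
    (h0 : ∀ i, ∫ ω, X i ω ∂μ = 0) {m₂ m₄ : ι → ℝ} (h2 : ∀ i, ∫ ω, X i ω ^ 2 ∂μ = m₂ i)
    (h4 : ∀ i, ∫ ω, X i ω ^ 4 ∂μ = m₄ i) (q : ι → ℝ) (a b c : ι) :
    ∫ ω, X a ω * X b ω * X c ω * ∑ i, q i * X i ω ∂μ
      = (if a = b then q c * (m₂ a * m₂ c) else 0)
        + (if a = c then q b * (m₂ a * m₂ b) else 0)
        + (if b = c then q a * (m₂ a * m₂ b) else 0)
        + (if a = b then if b = c then q c * (m₄ a - 3 * m₂ a ^ 2) else 0 else 0) := by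
  have e : ∀ ω, X a ω * X b ω * X c ω * ∑ i, q i * X i ω
      = ∑ i, q i * (X a ω * X b ω * X c ω * X i ω) := fun ω => by
    rw [Finset.mul_sum]
    exact Finset.sum_congr rfl fun i _ => by ring
  simp only [e]
  rw [integral_finsetSum _ fun i _ =>
    (integrable_mul_four_of_memLp_four (hL a) (hL b) (hL c) (hL i)).const_mul _]
  simp only [integral_const_mul, integral_mul_four_of_iIndepFun hX hind h0 h2 h4, mul_add,
    Finset.sum_add_distrib]
  congr 1
  · congr 1
    · congr 1 <;> split_ifs <;> simp
    · split_ifs <;> simp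
  · split_ifs <;> simp

/-- In the one-cluster model with finite fourth moments,
`E[(v+ε_j)(v+ε_k)² w] = τ² η⁻¹ [τ² (3 − κ_v) + σ_j² (κ_ε − 3) 1{j=k}]`,
where `w = (∑ λ_h − 1) v + ∑ λ_h ε_h`. -/
theorem stmt_12 {Ω : Type*} [MeasurableSpace Ω] (μ : Measure Ω) [IsProbabilityMeasure μ]
    (n : ℕ) (hn : 1 ≤ n) (v : Ω → ℝ) (ε : Fin n → Ω → ℝ)
    (hv : Measurable v) (hε : ∀ j, Measurable (ε j))
    (hindep : iIndepFun (m := fun _ : Option (Fin n) => (inferInstance : MeasurableSpace ℝ))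
      (fun i => Option.elim i v ε) μ)
    (τsq : ℝ) (hτ : 0 ≤ τsq) (s : Fin n → ℝ) (hs : ∀ j, 0 < s j)
    (hv4 : MemLp v 4 μ) (hε4 : ∀ j, MemLp (ε j) 4 μ)
    (hEv : ∫ ω, v ω ∂μ = 0) (hEvsq : ∫ ω, (v ω) ^ 2 ∂μ = τsq)
    (hEε : ∀ j, ∫ ω, ε j ω ∂μ = 0) (hEεsq : ∀ j, ∫ ω, (ε j ω) ^ 2 ∂μ = s j)
    (hEv3 : ∫ ω, (v ω) ^ 3 ∂μ = 0) (hEε3 : ∀ j, ∫ ω, (ε j ω) ^ 3 ∂μ = 0)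
    (κv κε : ℝ) (hEv4 : ∫ ω, (v ω) ^ 4 ∂μ = κv * τsq ^ 2)
    (hEε4 : ∀ j, ∫ ω, (ε j ω) ^ 4 ∂μ = κε * (s j) ^ 2)
    (η : ℝ) (hη : η = 1 + τsq * ∑ h, (s h)⁻¹)
    (lam : Fin n → ℝ) (hlam : ∀ j, lam j = τsq * (s j)⁻¹ * η⁻¹)
    (w : Ω → ℝ) (hw : ∀ ω, w ω = (∑ h, lam h - 1) * v ω + ∑ h, lam h * ε h ω) :
    ∀ j k, ∫ ω, (v ω + ε j ω) * (v ω + ε k ω) ^ 2 * w ω ∂μ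
      = τsq * η⁻¹ * (τsq * (3 - κv)
          + s j * (κε - 3) * (if j = k then 1 else 0)) := by
  intro j k
  let X : Option (Fin n) → Ω → ℝ := fun i => Option.elim i v ε
  let q : Option (Fin n) → ℝ := fun i => Option.elim i (∑ h, lam h - 1) lam
  let m₂ : Option (Fin n) → ℝ := fun i => Option.elim i τsq s
  let m₄ : Option (Fin n) → ℝ := fun i => Option.elim i (κv * τsq ^ 2) fun h => κε * s h ^ 2
  have hX : ∀ i, Measurable (X i) := Option.rec hv hε
  have hL : ∀ i, MemLp (X i) 4 μ := Option.rec hv4 hε4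
  have hwX : ∀ ω, w ω = ∑ i, q i * X i ω := fun ω => by
    rw [hw, Fintype.sum_option]
    rfl
  have hwL : MemLp w 4 μ := by
    rw [funext hwX]
    exact memLp_finsetSum _ fun i _ => (hL i).const_mul _
  have moment : ∀ a b c, ∫ ω, X a ω * X b ω * X c ω * w ω ∂μ = _ := fun a b c => by
    simp only [hwX]
    exact integral_mul_three_mul_sum_of_iIndepFun hX hindep hL (m₂ := m₂) (m₄ := m₄)
      (Option.rec hEv hEε) (Option.rec hEvsq hEεsq) (Option.rec hEv4 hEε4) q a b c
  have int : ∀ a b c, Integrable (fun ω => X a ω * X b ω * X c ω * w ω) μ := fun a b c =>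
    integrable_mul_four_of_memLp_four (hL a) (hL b) (hL c) hwL
  have expand : ∫ ω, (v ω + ε j ω) * (v ω + ε k ω) ^ 2 * w ω ∂μ
      = ∑ a ∈ {none, some j}, ∑ b ∈ {none, some k}, ∑ c ∈ {none, some k},
        ∫ ω, X a ω * X b ω * X c ω * w ω ∂μ := by
    simp_rw [← integral_finsetSum _ fun c _ => int _ _ c]
    simp_rw [← integral_finsetSum _ fun b _ => integrable_finsetSum _ fun c _ => int _ b c]
    rw [← integral_finsetSum _ fun a _ => integrable_finsetSum _ fun b _ =>
      integrable_finsetSum _ fun c _ => int a b c]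
    refine integral_congr_ae (.of_forall fun ω => ?_)
    simp only [Finset.sum_pair (Option.some_ne_none _).symm, X, Option.elim]
    ring
  have hη0 : η ≠ 0 := by
    have : 0 ≤ ∑ h, (s h)⁻¹ := Finset.sum_nonneg fun h _ => (inv_pos.2 (hs h)).le
    rw [hη]
    positivity
  have hq : ∑ h, lam h - 1 = -η⁻¹ := by
    simp only [hlam, ← Finset.sum_mul, ← Finset.mul_sum]
    rw [show τsq * ∑ h, (s h)⁻¹ = η - 1 by linarith]
    field_simp
    ring
  have hj := (hs j).ne'
  have hk := (hs k).ne'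
  rw [expand]
  simp only [moment, Finset.sum_pair (Option.some_ne_none _).symm]
  by_cases hjk : j = k
  · subst hjk
    simp only [q, m₂, m₄, Option.elim, hq, reduceCtorEq, if_true, if_false]
    rw [hlam]
    field_simp
    ring
  · simp only [q, m₂, m₄, Option.elim, hq, reduceCtorEq, Option.some.injEq, hjk, if_true, if_false]
    rw [hlam j, hlam k]
    field_simp
    ring
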